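/- Let Q³ be a unit 3-cube whose boundary ∂Q³ consists of six squares, and let A² be any nonempty proper connected union of squares of ∂Q³ that is homeomorphic to a disk. Then A² consists of 1, 2, 3, 4, or 5 squares, and the closed complement Cl(∂Q³ \ A²) is also a connected disk; in particular, any disk of 4 or 5 squares in ∂Q³ can be replaced by a complementary disk of at most 2 squares. -/

import Mathlib

open scoped Classical

/-- A `k`-dimensional face of the cubulation of `ℝⁿ` at scale `1/m`:
free coordinates in `S`, the rest fixed at lattice values `v i / m`. -/
def sFace (n m : ℕ) (v : Fin n → ℤ) (S : Finset (Fin n)) : Set (Fin n → ℝ) :=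
  {x | ∀ i, (i ∈ S → (v i : ℝ) / m ≤ x i ∧ x i ≤ ((v i : ℝ) + 1) / m) ∧
        (i ∉ S → x i = (v i : ℝ) / m)}

/-- The collection of all `k`-faces of the cubulation of `ℝⁿ` at scale `1/m`. -/
def sFaces (n m k : ℕ) : Set (Set (Fin n → ℝ)) :=
  {F | ∃ (v : Fin n → ℤ) (S : Finset (Fin n)), S.card = k ∧ F = sFace n m v S}

/-- The `k`-skeleton of the cubulation of `ℝⁿ` at scale `1/m`. -/
def skeleton (n m k : ℕ) : Set (Fin n → ℝ) := ⋃₀ sFaces n m k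


/-- The closed unit 2-disk. -/
def Disk2 : Set (EuclideanSpace ℝ (Fin 2)) := Metric.closedBall 0 1


namespace CubeDisk

/-- The sign attached to a Boolean. -/
def sg (s : Bool) : ℝ := if s then 1 else -1

/-- Union of the facets of `[-1,1]³` selected by `b`. -/
def U (b : Fin 3 → Bool → Bool) : Set (Fin 3 → ℝ) :=
  {x | (∀ i, |x i| ≤ 1) ∧ ∃ i s, b i s = true ∧ x i = sg s}

def mk (a0 a1 b0 b1 c0 c1 : Bool) : Fin 3 → Bool → Bool :=
  ![fun s => cond s a0 a1, fun s => cond s b0 b1, fun s => cond s c0 c1]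

def T1 := mk false false false false true false
def T2 := mk true false false false true false
def Tcorner := mk true false true false true false
def Tstrip := mk true false false false true true
def T4 := mk true false true false true true
def T5 := mk true true true true true false
def R := mk true true true true false false
def O := mk false false false false true true

def orb (T b : Fin 3 → Bool → Bool) : Prop :=
  ∃ σ : Equiv.Perm (Fin 3), ∃ ε : Fin 3 → Bool, ∀ i s, b i s = T (σ i) (s == ε i)

instance (T b : Fin 3 → Bool → Bool) : Decidable (orb T b) := by unfold orb; infer_instance

def good (b : Fin 3 → Bool → Bool) : Prop :=
  orb T1 b ∨ orb T2 b ∨ orb Tcorner b ∨ orb Tstrip b ∨ orb T4 b ∨ orb T5 b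

instance (b : Fin 3 → Bool → Bool) : Decidable (good b) := by unfold good; infer_instance

lemma classify : ∀ b : Fin 3 → Bool → Bool, (∀ i s, b i s = false) ∨ (∀ i s, b i s = true) ∨
    orb R b ∨ orb O b ∨ good (fun i s => !(b i s)) := by
  decide +kernel

lemma orb_homeo {T b : Fin 3 → Bool → Bool} (h : orb T b) : Nonempty (U T ≃ₜ U b) := by
  obtain ⟨σ, ε, h⟩ := h
  have hsg : ∀ s, sg s * sg s = 1 := by intro s; cases s <;> simp [sg]
  have habs : ∀ s, |sg s| = 1 := by intro s; cases s <;> simp [sg]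
  have hmul : ∀ s t, sg s * sg t = sg (t == s) := by
    intro s t; cases s <;> cases t <;> simp [sg]
  let Ψ : (Fin 3 → ℝ) ≃ₜ (Fin 3 → ℝ) :=
    { toFun := fun x i => sg (ε i) * x (σ i)
      invFun := fun y j => sg (ε (σ.symm j)) * y (σ.symm j)
      left_inv := by intro x; ext j; simp [← mul_assoc, hsg]
      right_inv := by intro x; ext j; simp [← mul_assoc, hsg]
      continuous_toFun := by fun_prop
      continuous_invFun := by fun_prop }
  refine ⟨Ψ.subtype ?_⟩
  intro x
  have hΨ : ∀ i, Ψ x i = sg (ε i) * x (σ i) := fun i => rfl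
  simp only [U, Set.mem_ofPred_eq, hΨ, abs_mul, habs, one_mul]
  refine and_congr ?_ ?_
  · exact (σ.forall_congr_right (q := fun i => |x i| ≤ 1)).symm
  · constructor
    · rintro ⟨i, s, hb, hx⟩
      refine ⟨σ.symm i, (s == ε (σ.symm i)), ?_, ?_⟩
      · rw [h]; simp only [Equiv.apply_symm_apply]; rw [← hb]; congr 1
        cases s <;> cases ε (σ.symm i) <;> rfl
      · simp [hx, hmul]
    · rintro ⟨i, s, hb, hx⟩
      refine ⟨σ i, (s == ε i), by rw [← h]; exact hb, ?_⟩
      rw [← hmul, ← hx, ← mul_assoc, hsg, one_mul]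

/-- Model planar convex bodies. -/
def K (α β γ δ : ℝ) : Set (ℝ × ℝ) :=
  {p | |p.1| ≤ α ∧ |p.2| ≤ β ∧ |p.1 + p.2| ≤ γ ∧ |p.1 - p.2| ≤ δ}

lemma K_convex (α β γ δ : ℝ) : Convex ℝ (K α β γ δ) := by
  intro p hp q hq a b ha hb hab
  simp only [K, Set.mem_ofPred_eq, abs_le, Prod.fst_add, Prod.snd_add, Prod.smul_fst,
    Prod.smul_snd, smul_eq_mul] at *
  obtain rfl : b = 1 - a := by linarith
  obtain ⟨⟨h1, h2⟩, ⟨h3, h4⟩, ⟨h5, h6⟩, ⟨h7, h8⟩⟩ := hp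
  obtain ⟨⟨k1, k2⟩, ⟨k3, k4⟩, ⟨k5, k6⟩, ⟨k7, k8⟩⟩ := hq
  refine ⟨⟨?_, ?_⟩, ⟨?_, ?_⟩, ⟨?_, ?_⟩, ⟨?_, ?_⟩⟩ <;> nlinarith

lemma K_closed (α β γ δ : ℝ) : IsClosed (K α β γ δ) := by
  refine IsClosed.and (isClosed_le (by fun_prop) (by fun_prop)) ?_
  refine IsClosed.and (isClosed_le (by fun_prop) (by fun_prop)) ?_
  exact IsClosed.and (isClosed_le (by fun_prop) (by fun_prop))
    (isClosed_le (by fun_prop) (by fun_prop))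

lemma K_disk {α β γ δ : ℝ} (hα : 0 < α) (hβ : 0 < β) (hγ : 0 < γ) (hδ : 0 < δ) :
    Nonempty (K α β γ δ ≃ₜ ↥Disk2) := by
  have hint : (0 : ℝ × ℝ) ∈ interior (K α β γ δ) := by
    have ho : IsOpen {p : ℝ × ℝ | |p.1| < α ∧ |p.2| < β ∧ |p.1 + p.2| < γ ∧ |p.1 - p.2| < δ} := by
      refine IsOpen.and (isOpen_lt (by fun_prop) (by fun_prop)) ?_
      refine IsOpen.and (isOpen_lt (by fun_prop) (by fun_prop)) ?_
      exact IsOpen.and (isOpen_lt (by fun_prop) (by fun_prop))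
        (isOpen_lt (by fun_prop) (by fun_prop))
    refine mem_interior.2 ⟨_, ?_, ho, ?_⟩
    · rintro p ⟨h1, h2, h3, h4⟩
      exact ⟨h1.le, h2.le, h3.le, h4.le⟩
    · simp [*]
  have hb : Bornology.IsBounded (K α β γ δ) := by
    refine (Metric.isBounded_closedBall (x := (0 : ℝ × ℝ)) (r := max α β)).subset ?_
    rintro p ⟨h1, h2, -⟩
    simp only [mem_closedBall_zero_iff, Prod.norm_def, Real.norm_eq_abs]
    exact max_le_max h1 h2
  let e : (ℝ × ℝ) ≃L[ℝ] EuclideanSpace ℝ (Fin 2) :=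
    ContinuousLinearEquiv.ofFinrankEq (by simp)
  have hc' : Convex ℝ (e '' K α β γ δ) := (K_convex α β γ δ).is_linear_image e.isLinear
  have hb' : Bornology.IsBounded (e '' K α β γ δ) :=
    e.lipschitz.isBounded_image hb
  have hi' : (interior (e '' K α β γ δ)).Nonempty :=
    ⟨e 0, by
      have := e.toHomeomorph.image_interior (K α β γ δ)
      have h2 : e 0 ∈ e.toHomeomorph '' interior (K α β γ δ) := ⟨0, hint, rfl⟩
      rw [this] at h2; exact h2⟩
  obtain ⟨h, -, h2, -⟩ := exists_homeomorph_image_interior_closure_frontier_eq_unitBall hc' hi' hb'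
  have hcl : IsClosed (e '' K α β γ δ) := e.toHomeomorph.isClosedMap _ (K_closed α β γ δ)
  rw [hcl.closure_eq] at h2
  refine ⟨(e.toHomeomorph.image _).trans ((h.image _).trans (Homeomorph.setCongr ?_))⟩
  exact h2

lemma mkHomeo {X : Set (Fin 3 → ℝ)} {Y : Set (ℝ × ℝ)} (f : (Fin 3 → ℝ) → ℝ × ℝ)
    (g : ℝ × ℝ → Fin 3 → ℝ) (hf : Continuous f) (hg : Continuous g)
    (h1 : ∀ x ∈ X, f x ∈ Y ∧ g (f x) = x) (h2 : ∀ y ∈ Y, g y ∈ X ∧ f (g y) = y) :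
    Nonempty (X ≃ₜ Y) :=
  ⟨{ toFun := fun x => ⟨f x, (h1 x x.2).1⟩
     invFun := fun y => ⟨g y, (h2 y y.2).1⟩
     left_inv := fun x => Subtype.ext (h1 x x.2).2
     right_inv := fun y => Subtype.ext (h2 y y.2).2
     continuous_toFun := by fun_prop
     continuous_invFun := by fun_prop }⟩

lemma lift_circle {X : Type*} [TopologicalSpace X] [ContractibleSpace X] (f : C(X, Circle)) :
    ∃ L : C(X, ℝ), ∀ x, Circle.exp (L x) = f x := by
  obtain ⟨x0, ⟨H⟩⟩ := id_nullhomotopic X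
  let G : C(unitInterval × X, Circle) := f.comp H.symm.toContinuousMap
  obtain ⟨e, he⟩ : ∃ e, Circle.exp e = f x0 := ⟨_, Circle.exp_arg _⟩
  have hG0 : ∀ a, G (0, a) = Circle.exp ((ContinuousMap.const X e) a) := by
    intro a
    have : H.symm (0, a) = x0 := by simp
    simp only [ContinuousMap.const_apply, he]
    exact congrArg f this
  refine ⟨(Circle.isCoveringMap_exp.liftHomotopy G (.const X e) hG0).comp
    ((ContinuousMap.const X 1).prodMk (.id X)), fun x => ?_⟩
  have := congrFun (Circle.isCoveringMap_exp.liftHomotopy_lifts G (.const X e) hG0) (1, x)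
  refine Eq.trans this ?_
  have h1 : H.symm (1, x) = x := by simp
  exact congrArg f h1

instance : ContractibleSpace ↥Disk2 :=
  (convex_closedBall (0 : EuclideanSpace ℝ (Fin 2)) 1).contractibleSpace ⟨0, by simp⟩


lemma good_T1 : Nonempty (U T1 ≃ₜ K 1 1 2 2) := by
  refine mkHomeo (fun x => (x 0, x 1)) (fun p => ![p.1, p.2, 1]) (by fun_prop) (by fun_prop) ?_ ?_
  · rintro x ⟨hx, i, s, hb, hi⟩
    have h0 := abs_le.1 (hx 0); have h1 := abs_le.1 (hx 1)
    fin_cases i <;> cases s <;> simp [T1, mk, sg] at hb hi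
    refine ⟨⟨hx 0, hx 1, abs_le.2 ⟨?_, ?_⟩, abs_le.2 ⟨?_, ?_⟩⟩, ?_⟩
    any_goals (simp only; linarith)
    ext j; fin_cases j <;> simp [hi]
  · rintro ⟨a, b⟩ ⟨h1, h2, -, -⟩
    refine ⟨⟨?_, 2, true, rfl, rfl⟩, rfl⟩
    intro j; fin_cases j <;> simp_all

lemma good_T2 : Nonempty (U T2 ≃ₜ K 1 2 3 3) := by
  refine mkHomeo (fun x => (x 1, x 2 - x 0)) (fun p => ![1 - max p.2 0, p.1, 1 + min p.2 0])
    (by fun_prop) (by fun_prop) ?_ ?_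
  · rintro x ⟨hx, i, s, hb, hi⟩
    have h0 := abs_le.1 (hx 0); have h1 := abs_le.1 (hx 1); have h2 := abs_le.1 (hx 2)
    refine ⟨⟨hx 1, abs_le.2 ⟨?_, ?_⟩, abs_le.2 ⟨?_, ?_⟩, abs_le.2 ⟨?_, ?_⟩⟩, ?_⟩
    any_goals (fin_cases i <;> cases s <;> simp [T2, mk, sg] at hb hi <;> simp only <;> linarith)
    ext j
    fin_cases i <;> cases s <;> simp [T2, mk, sg] at hb hi <;> fin_cases j <;> simp [hi] <;> grind
  · rintro ⟨a, b⟩ ⟨h1, h2, -, -⟩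
    simp only [abs_le] at h1 h2
    refine ⟨⟨?_, ?_⟩, ?_⟩
    · intro j; fin_cases j <;> simp <;> grind
    · rcases le_total b 0 with h | h
      · exact ⟨0, true, rfl, by simp [sg, h]⟩
      · exact ⟨2, true, rfl, by simp [sg, h]⟩
    · simp <;> grind

lemma clamp_mul (b : ℝ) : max (-1) (min 1 b) * max 1 |b| = b := by
  rcases le_total b (-1) with h | h
  · rw [max_eq_left ((min_le_right _ _).trans h), abs_of_nonpos (by linarith),
      max_eq_right (by linarith)]; ring
  · rcases le_total b 1 with h' | h'
    · rw [min_eq_right h', max_eq_right h, max_eq_left (abs_le.2 ⟨h, h'⟩), mul_one]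
    · rw [min_eq_left h', abs_of_nonneg (by linarith), max_eq_right h']; norm_num

lemma clamp_aux {M c : ℝ} (hM : M ≤ 1) (hc : -1 ≤ c ∧ c ≤ 1) (h : M = 1 ∨ c = 1 ∨ c = -1) :
    max 1 |c * (2 - M)| = 2 - M ∧ max (-1) (min 1 (c * (2 - M))) = c := by
  have hp : 0 < 2 - M := by linarith
  rcases h with rfl | rfl | rfl
  · have e : c * (2 - 1) = c := by ring
    rw [e, max_eq_left (abs_le.2 hc), min_eq_right hc.2, max_eq_right hc.1]
    norm_num
  · rw [one_mul, abs_of_pos hp, max_eq_right (by linarith), min_eq_left (by linarith)]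
    norm_num
  · rw [abs_mul, abs_of_pos hp, abs_neg, abs_one, one_mul, max_eq_right (by linarith),
      min_eq_right (by linarith), max_eq_left (by linarith)]
    norm_num

lemma good_Tcorner : Nonempty (U Tcorner ≃ₜ K 2 2 2 4) := by
  refine mkHomeo (fun x => (x 0 - x 1, x 1 - x 2))
    (fun p => ![p.1 + p.2 + 1 - max (p.1 + p.2) (max p.2 0), p.2 + 1 - max (p.1 + p.2) (max p.2 0),
      1 - max (p.1 + p.2) (max p.2 0)]) (by fun_prop) (by fun_prop) ?_ ?_
  · rintro x ⟨hx, i, s, hb, hi⟩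
    have h0 := abs_le.1 (hx 0); have h1 := abs_le.1 (hx 1); have h2 := abs_le.1 (hx 2)
    have hM : max (x 0 - x 1 + (x 1 - x 2)) (max (x 1 - x 2) 0) = 1 - x 2 := by
      fin_cases i <;> cases s <;> simp [Tcorner, mk, sg] at hb hi <;> grind
    refine ⟨⟨abs_le.2 ⟨?_, ?_⟩, abs_le.2 ⟨?_, ?_⟩, abs_le.2 ⟨?_, ?_⟩, abs_le.2 ⟨?_, ?_⟩⟩, ?_⟩
    any_goals (simp only; linarith)
    ext j
    simp only [hM]
    fin_cases j <;> simp <;> ring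
  · rintro ⟨a, b⟩ ⟨h1, h2, h3, -⟩
    simp only [abs_le] at h1 h2 h3
    refine ⟨⟨?_, ?_⟩, ?_⟩
    · intro j; fin_cases j <;> simp only [abs_le] <;> simp <;> grind
    · rcases max_choice (a + b) (max b 0) with h | h
      · exact ⟨0, true, rfl, by simp [sg, h]⟩
      · rcases max_choice b 0 with h' | h'
        · exact ⟨1, true, rfl, by simp only [h]; simp only [h']; simp [sg]⟩
        · exact ⟨2, true, rfl, by simp only [h]; simp only [h']; simp [sg]⟩
    · simp

lemma good_Tstrip : Nonempty (U Tstrip ≃ₜ K 1 3 4 4) := by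
  refine mkHomeo (fun x => (x 1, x 2 * (2 - x 0)))
    (fun p => ![2 - max 1 |p.2|, p.1, max (-1) (min 1 p.2)]) (by fun_prop) (by fun_prop) ?_ ?_
  · rintro x ⟨hx, i, s, hb, hi⟩
    have h0 := abs_le.1 (hx 0); have h1 := abs_le.1 (hx 1); have h2 := abs_le.1 (hx 2)
    have hc : (x 0 = 1) ∨ (x 2 = 1) ∨ (x 2 = -1) := by
      fin_cases i <;> cases s <;> simp [Tstrip, mk, sg] at hb hi <;> simp [hi]
    clear hb hi
    refine ⟨⟨hx 1, abs_le.2 ⟨?_, ?_⟩, abs_le.2 ⟨?_, ?_⟩, abs_le.2 ⟨?_, ?_⟩⟩, ?_⟩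
    any_goals (rcases hc with h | h | h <;> simp only [h] <;> linarith)
    ext j
    rcases hc with h | h | h <;> fin_cases j <;> simp [h] <;> grind
  · rintro ⟨a, b⟩ ⟨h1, h2, -, -⟩
    simp only [abs_le] at h1 h2
    refine ⟨⟨?_, ?_⟩, ?_⟩
    · intro j; fin_cases j <;> simp only [abs_le] <;> simp <;> grind
    · rcases le_total |b| 1 with h | h
      · exact ⟨0, true, rfl, by simp [sg, h]; norm_num⟩
      · rcases le_abs'.1 h with h' | h'
        · exact ⟨2, false, rfl, by simp [sg]; grind⟩
        · exact ⟨2, true, rfl, by simp [sg]; grind⟩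
    · have h3 := clamp_mul b
      simp [h3]

lemma good_T4 : Nonempty (U T4 ≃ₜ K 2 3 3 3) := by
  refine mkHomeo (fun x => (x 0 - x 1, x 2 * (2 - max (x 0) (x 1))))
    (fun p => ![2 - max 1 |p.2| + min p.1 0, 2 - max 1 |p.2| - max p.1 0, max (-1) (min 1 p.2)])
    (by fun_prop) (by fun_prop) ?_ ?_
  · rintro x ⟨hx, i, s, hb, hi⟩
    have h0 := abs_le.1 (hx 0); have h1 := abs_le.1 (hx 1); have h2 := abs_le.1 (hx 2)
    have hc : (max (x 0) (x 1) = 1) ∨ (x 2 = 1) ∨ (x 2 = -1) := by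
      fin_cases i <;> cases s <;> simp [T4, mk, sg] at hb hi <;> grind
    clear hb hi
    refine ⟨⟨abs_le.2 ⟨?_, ?_⟩, abs_le.2 ⟨?_, ?_⟩, abs_le.2 ⟨?_, ?_⟩, abs_le.2 ⟨?_, ?_⟩⟩, ?_⟩
    any_goals (simp only; linarith)
    any_goals (rcases hc with h | h | h <;> simp only [h] <;> grind)
    obtain ⟨k1, k2⟩ := clamp_aux (max_le h0.2 h1.2) h2 hc
    ext j
    simp only [k1, k2]
    clear hx k1 k2 hc
    fin_cases j <;> simp <;> grind
  · rintro ⟨a, b⟩ ⟨h1, h2, h3, h4⟩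
    simp only [abs_le] at h1 h2 h3 h4
    refine ⟨⟨?_, ?_⟩, ?_⟩
    · intro j; fin_cases j <;> simp only [abs_le] <;> simp <;> grind
    · rcases le_total |b| 1 with h | h
      · rcases le_total a 0 with h' | h'
        · exact ⟨1, true, rfl, by simp [sg, h, h']; norm_num⟩
        · exact ⟨0, true, rfl, by simp [sg, h, h']; norm_num⟩
      · rcases le_abs'.1 h with h' | h'
        · exact ⟨2, false, rfl, by simp [sg]; grind⟩
        · exact ⟨2, true, rfl, by simp [sg]; grind⟩
    · have hm : max (2 - max 1 |b| + min a 0) (2 - max 1 |b| - max a 0) = 2 - max 1 |b| := by grind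
      have h3 := clamp_mul b
      simp [hm, h3]

lemma good_T5 : Nonempty (U T5 ≃ₜ K 3 3 6 6) := by
  have hpos : ∀ p : ℝ × ℝ, 0 < max 1 (max |p.1| |p.2|) := fun p => lt_max_of_lt_left one_pos
  refine mkHomeo (fun x => (x 0 * (2 - x 2), x 1 * (2 - x 2)))
    (fun p => ![p.1 / max 1 (max |p.1| |p.2|), p.2 / max 1 (max |p.1| |p.2|),
      2 - max 1 (max |p.1| |p.2|)])
    (by fun_prop) ?_ ?_ ?_
  · refine continuous_pi fun j => ?_
    fin_cases j
    · exact Continuous.div (by fun_prop) (by fun_prop) fun p => (hpos p).ne'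
    · exact Continuous.div (by fun_prop) (by fun_prop) fun p => (hpos p).ne'
    · simp only; show Continuous fun p : ℝ × ℝ => 2 - max 1 (max |p.1| |p.2|)
      fun_prop
  · rintro x ⟨hx, i, s, hb, hi⟩
    have h0 := abs_le.1 (hx 0); have h1 := abs_le.1 (hx 1); have h2 := abs_le.1 (hx 2)
    have hp : 0 < 2 - x 2 := by linarith
    have hc : x 2 = 1 ∨ |x 0| = 1 ∨ |x 1| = 1 := by
      fin_cases i <;> cases s <;> simp [T5, mk, sg] at hb hi <;> simp [hi]
    clear hb hi
    have hN : max 1 (max |x 0 * (2 - x 2)| |x 1 * (2 - x 2)|) = 2 - x 2 := by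
      rw [abs_mul, abs_mul, abs_of_pos hp]
      have e0 : |x 0| * (2 - x 2) ≤ 2 - x 2 := by nlinarith [hx 0]
      have e1 : |x 1| * (2 - x 2) ≤ 2 - x 2 := by nlinarith [hx 1]
      apply le_antisymm
      · exact max_le (by linarith) (max_le e0 e1)
      · rcases hc with h | h | h
        · rw [h]; norm_num
        · rw [h]; simp
        · rw [h]; simp
    have e0 : |x 0 * (2 - x 2)| ≤ 3 := by
      rw [abs_mul, abs_of_pos hp]; nlinarith [hx 0, abs_nonneg (x 0)]
    have e1 : |x 1 * (2 - x 2)| ≤ 3 := by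
      rw [abs_mul, abs_of_pos hp]; nlinarith [hx 1, abs_nonneg (x 1)]
    have e0' := abs_le.1 e0
    have e1' := abs_le.1 e1
    refine ⟨⟨e0, e1, abs_le.2 ⟨?_, ?_⟩, abs_le.2 ⟨?_, ?_⟩⟩, ?_⟩
    any_goals (simp only; linarith)
    ext j
    simp only [hN]
    fin_cases j <;> simp [hp.ne']
  · rintro ⟨a, b⟩ ⟨h1, h2, h3, h4⟩
    have hP := hpos (a, b)
    simp only at h1 h2 hP
    obtain ⟨N, hN⟩ : ∃ N, N = max 1 (max |a| |b|) := ⟨_, rfl⟩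
    have ha : |a| ≤ N := by grind
    have hb : |b| ≤ N := by grind
    have hN1 : 1 ≤ N := by grind
    have hN3 : N ≤ 3 := by grind
    have hcase : N = 1 ∨ N = |a| ∨ N = |b| := by grind
    simp only [← hN] at *
    have hda : |a / N| ≤ 1 := by rw [abs_div, abs_of_pos hP]; exact (div_le_one hP).2 ha
    have hdb : |b / N| ≤ 1 := by rw [abs_div, abs_of_pos hP]; exact (div_le_one hP).2 hb
    refine ⟨⟨?_, ?_⟩, ?_⟩
    · intro j; fin_cases j
      · exact hda
      · exact hdb
      · exact abs_le.2 ⟨by simp; linarith, by simp; linarith⟩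
    · rcases hcase with h | h | h
      · exact ⟨2, true, rfl, by simp [sg, h]; norm_num⟩
      · rcases abs_choice a with h' | h'
        · refine ⟨0, true, rfl, ?_⟩
          simp only [sg]; simp; rw [div_eq_one_iff_eq hP.ne']; linarith
        · refine ⟨0, false, rfl, ?_⟩
          simp only [sg]; simp; rw [div_eq_iff hP.ne']; linarith
      · rcases abs_choice b with h' | h'
        · refine ⟨1, true, rfl, ?_⟩
          simp only [sg]; simp; rw [div_eq_one_iff_eq hP.ne']; linarith
        · refine ⟨1, false, rfl, ?_⟩
          simp only [sg]; simp; rw [div_eq_iff hP.ne']; linarith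
    · simp [hP.ne']

lemma good_disk {b : Fin 3 → Bool → Bool} (h : good b) : Nonempty (U b ≃ₜ ↥Disk2) := by
  have key : ∀ {T : Fin 3 → Bool → Bool} {α β γ δ : ℝ}, orb T b → Nonempty (U T ≃ₜ K α β γ δ) →
      0 < α → 0 < β → 0 < γ → 0 < δ → Nonempty (U b ≃ₜ ↥Disk2) := by
    intro T α β γ δ ho ⟨e⟩ h1 h2 h3 h4
    obtain ⟨e1⟩ := orb_homeo ho
    obtain ⟨e2⟩ := K_disk h1 h2 h3 h4
    exact ⟨e1.symm.trans (e.trans e2)⟩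
  rcases h with h | h | h | h | h | h
  · exact key h good_T1 (by norm_num) (by norm_num) (by norm_num) (by norm_num)
  · exact key h good_T2 (by norm_num) (by norm_num) (by norm_num) (by norm_num)
  · exact key h good_Tcorner (by norm_num) (by norm_num) (by norm_num) (by norm_num)
  · exact key h good_Tstrip (by norm_num) (by norm_num) (by norm_num) (by norm_num)
  · exact key h good_T4 (by norm_num) (by norm_num) (by norm_num) (by norm_num)
  · exact key h good_T5 (by norm_num) (by norm_num) (by norm_num) (by norm_num)

lemma not_O (e : U O ≃ₜ ↥Disk2) : False := by
  have : ContractibleSpace (U O) := e.contractibleSpace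
  have hc : Continuous fun p : U O => p.1 2 :=
    (continuous_apply 2).comp continuous_subtype_val
  have m1 : (![0, 0, 1] : Fin 3 → ℝ) ∈ U O :=
    ⟨by intro j; fin_cases j <;> simp, 2, true, rfl, by simp [sg]⟩
  have m2 : (![0, 0, -1] : Fin 3 → ℝ) ∈ U O :=
    ⟨by intro j; fin_cases j <;> simp, 2, false, rfl, by simp [sg]⟩
  obtain ⟨⟨x, hx, i, s, hb, hi⟩, h0⟩ := mem_range_of_exists_le_of_exists_ge hc (c := 0)
    ⟨⟨_, m2⟩, by simp⟩ ⟨⟨_, m1⟩, by simp⟩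
  fin_cases i <;> cases s <;> simp [O, mk, sg] at hb hi <;> simp [hi] at h0

lemma not_R (e : U R ≃ₜ ↥Disk2) : False := by
  have : ContractibleSpace (U R) := e.contractibleSpace
  have hne : ∀ p : U R, (⟨p.1 0, p.1 1⟩ : ℂ) ≠ 0 := by
    rintro ⟨x, hx, i, s, hb, hi⟩ h
    rw [Complex.ext_iff] at h
    fin_cases i <;> cases s <;> simp [R, mk, sg] at hb hi <;> simp [hi] at h
  have hcz : Continuous fun p : U R => (⟨p.1 0, p.1 1⟩ : ℂ) := by
    have : (fun p : U R => (⟨p.1 0, p.1 1⟩ : ℂ)) =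
        fun p : U R => ((p.1 0 : ℝ) : ℂ) + ((p.1 1 : ℝ) : ℂ) * Complex.I := by
      ext p; exact Complex.mk_eq_add_mul_I _ _
    rw [this]
    have c0 : Continuous fun p : U R => p.1 0 := (continuous_apply 0).comp continuous_subtype_val
    have c1 : Continuous fun p : U R => p.1 1 := (continuous_apply 1).comp continuous_subtype_val
    exact (Complex.continuous_ofReal.comp c0).add
      ((Complex.continuous_ofReal.comp c1).mul continuous_const)
  let f : C(U R, Circle) :=
    { toFun := fun p => ⟨(⟨p.1 0, p.1 1⟩ : ℂ) / (‖(⟨p.1 0, p.1 1⟩ : ℂ)‖ : ℂ), by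
        simp [Submonoid.unitSphere, hne p]⟩
      continuous_toFun := by
        refine Continuous.subtype_mk (hcz.div (by fun_prop) ?_) _
        intro p; simpa using hne p }
  obtain ⟨L, hL⟩ := lift_circle f
  have hneg : ∀ p : U R, -p.1 ∈ U R := by
    rintro ⟨x, hx, i, s, hb, hi⟩
    refine ⟨by simpa using hx, i, !s, ?_, ?_⟩
    · rw [← hb]; fin_cases i <;> cases s <;> simp [R, mk]
    · cases s <;> simp [sg, hi]
  let ν : U R → U R := fun p => ⟨-p.1, hneg p⟩
  have hν : Continuous ν := by fun_prop
  have hνν : ∀ p, ν (ν p) = p := fun p => Subtype.ext (neg_neg _)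
  have hd : Continuous fun p => L (ν p) - L p := by fun_prop
  obtain ⟨p0⟩ : Nonempty (U R) := inferInstance
  obtain ⟨p, hp⟩ : (0 : ℝ) ∈ Set.range fun p => L (ν p) - L p := by
    rcases le_total (L (ν p0) - L p0) 0 with h | h
    · exact mem_range_of_exists_le_of_exists_ge hd ⟨p0, h⟩ ⟨ν p0, by rw [hνν]; linarith⟩
    · exact mem_range_of_exists_le_of_exists_ge hd ⟨ν p0, by rw [hνν]; linarith⟩ ⟨p0, h⟩
  have h1 : f (ν p) = f p := by
    rw [← hL, ← hL, sub_eq_zero.1 hp]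
  have h2 : ((f (ν p) : Circle) : ℂ) = -((f p : Circle) : ℂ) := by
    have hz : (⟨(ν p).1 0, (ν p).1 1⟩ : ℂ) = -⟨p.1 0, p.1 1⟩ := by
      apply Complex.ext <;> simp [ν]
    show (⟨(ν p).1 0, (ν p).1 1⟩ : ℂ) / (‖(⟨(ν p).1 0, (ν p).1 1⟩ : ℂ)‖ : ℂ) =
      -((⟨p.1 0, p.1 1⟩ : ℂ) / (‖(⟨p.1 0, p.1 1⟩ : ℂ)‖ : ℂ))
    rw [hz, norm_neg, neg_div]
  rw [h1] at h2
  exact Circle.coe_ne_zero (f p) (self_eq_neg.1 h2)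

lemma U_closed (b : Fin 3 → Bool → Bool) : IsClosed (U b) := by
  have : U b = (⋂ i, {x | |x i| ≤ 1}) ∩ ⋃ i, ⋃ s, {x | b i s = true ∧ x i = sg s} := by
    ext x; simp [U]
  rw [this]
  refine (isClosed_iInter fun i => isClosed_le (by fun_prop) (by fun_prop)).inter ?_
  refine isClosed_iUnion_of_finite fun i => isClosed_iUnion_of_finite fun s => ?_
  exact isClosed_const.and (isClosed_eq (by fun_prop) (by fun_prop))

lemma U_closure (b : Fin 3 → Bool → Bool) :
    closure (U (fun _ _ => true) \ U b) = U (fun i s => !(b i s)) := by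
  apply subset_antisymm
  · refine closure_minimal ?_ (U_closed _)
    rintro x ⟨⟨hx, i, s, -, hi⟩, hn⟩
    refine ⟨hx, i, s, ?_, hi⟩
    by_contra h
    exact hn ⟨hx, i, s, by simpa using h, hi⟩
  · rintro x ⟨hx, i, s, hb, hi⟩
    have habs : ∀ s, |sg s| = 1 := by intro s; cases s <;> simp [sg]
    have hmem : x ∈ closure (openSegment ℝ x (Pi.single i (sg s))) := by
      rw [closure_openSegment]; exact left_mem_segment _ _ _
    refine closure_mono ?_ hmem
    rintro y ⟨a, c, ha, hc, hac, rfl⟩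
    have hyi : (a • x + c • (Pi.single i (sg s) : Fin 3 → ℝ)) i = sg s := by
      simp [hi, ← add_mul, hac]
    have hyj : ∀ j, j ≠ i → |(a • x + c • (Pi.single i (sg s) : Fin 3 → ℝ)) j| < 1 := by
      intro j hj
      simp only [Pi.add_apply, Pi.smul_apply, smul_eq_mul, Pi.single_eq_of_ne hj, mul_zero,
        add_zero, abs_mul, abs_of_pos ha]
      nlinarith [hx j, abs_nonneg (x j)]
    refine ⟨⟨?_, i, s, rfl, hyi⟩, ?_⟩
    · intro j
      by_cases hj : j = i
      · subst hj; rw [hyi, habs]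
      · exact (hyj j hj).le
    · rintro ⟨-, j, t, hbt, hj⟩
      by_cases hji : j = i
      · subst hji
        rw [hyi] at hj
        have : s = t := by
          cases s <;> cases t <;> first | rfl | (norm_num [sg] at hj)
        subst this
        simp [hbt] at hb
      · have := hyj j hji
        rw [hj, habs] at this
        exact lt_irrefl _ this

/-- Normalisation of the cube with lowest vertex `v` to `[-1,1]³`. -/
noncomputable def Phi (v : Fin 3 → ℤ) : (Fin 3 → ℝ) ≃ₜ (Fin 3 → ℝ) where
  toFun x i := 2 * (x i - v i) - 1
  invFun y i := (y i + 1) / 2 + v i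
  left_inv x := by ext i; simp
  right_inv x := by ext i; simp; ring
  continuous_toFun := by fun_prop
  continuous_invFun := by fun_prop

lemma Phi_apply (v : Fin 3 → ℤ) (x : Fin 3 → ℝ) (i : Fin 3) :
    Phi v x i = 2 * (x i - v i) - 1 := rfl

/-- The facet of the cube at `v` in direction `p.1` on side `p.2`. -/
def F (v : Fin 3 → ℤ) (p : Fin 3 × Bool) : Set (Fin 3 → ℝ) :=
  {x | (∀ j, (v j : ℝ) ≤ x j ∧ x j ≤ v j + 1) ∧ x p.1 = v p.1 + (if p.2 then 1 else 0)}

lemma mem_F (v : Fin 3 → ℤ) (p : Fin 3 × Bool) (x : Fin 3 → ℝ) :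
    x ∈ F v p ↔ (∀ i, |Phi v x i| ≤ 1) ∧ Phi v x p.1 = sg p.2 := by
  obtain ⟨i, s⟩ := p
  simp only [F, Set.mem_ofPred_eq, Phi_apply, abs_le]
  refine and_congr (forall_congr' fun j => ⟨fun h => ⟨?_, ?_⟩, fun h => ⟨?_, ?_⟩⟩) ?_
  any_goals linarith [h.1, h.2]
  cases s
  · simp only [sg, Bool.false_eq_true, if_false]
    constructor <;> intro h <;> linarith
  · simp only [sg, if_true]
    constructor <;> intro h <;> linarith

lemma F_eq_sFace (v : Fin 3 → ℤ) (p : Fin 3 × Bool) :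
    F v p = sFace 3 1 (Function.update v p.1 (v p.1 + (if p.2 then 1 else 0))) {p.1}ᶜ := by
  obtain ⟨i, s⟩ := p
  ext x
  simp only [F, sFace, Set.mem_ofPred_eq, Nat.cast_one, div_one]
  constructor
  · rintro ⟨h, hi⟩ j
    refine ⟨fun hj => ?_, fun hj => ?_⟩
    · have hj : j ≠ i := by simpa using hj
      rw [Function.update_of_ne hj]; exact h j
    · have hj : j = i := by simpa using hj
      subst hj
      rw [Function.update_self, hi]; push_cast; rfl
  · intro h
    have hi : x i = v i + (if s then 1 else 0) := by
      have := (h i).2 (by simp)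
      rw [Function.update_self] at this
      rw [this]; push_cast; rfl
    refine ⟨fun j => ?_, hi⟩
    by_cases hj : j = i
    · subst hj
      rw [hi]; cases s <;> simp
    · have := (h j).1 (by simpa using hj)
      rwa [Function.update_of_ne hj] at this

lemma faces_eq (v : Fin 3 → ℤ) :
    {G ∈ sFaces 3 1 2 | G ⊆ sFace 3 1 v Finset.univ} = Set.range (F v) := by
  ext G
  constructor
  · rintro ⟨⟨w, S, hS, rfl⟩, hsub⟩
    have hc : Sᶜ.card = 1 := by rw [Finset.card_compl, hS]; rfl
    obtain ⟨i, hi⟩ := Finset.card_eq_one.1 hc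
    have hSi : S = {i}ᶜ := by rw [← hi, compl_compl]
    subst hSi
    have m1 : (fun j => (w j : ℝ)) ∈ sFace 3 1 w {i}ᶜ := by
      intro j; simp
    have m2 : (fun j => (w j : ℝ) + (if j = i then 0 else 1)) ∈ sFace 3 1 w {i}ᶜ := by
      intro j
      by_cases hj : j = i <;> simp [hj]
    have k1 := fun j => (hsub m1 j).1 (Finset.mem_univ _)
    have k2 := fun j => (hsub m2 j).1 (Finset.mem_univ _)
    simp only [Nat.cast_one, div_one] at k1 k2
    have hj : ∀ j, j ≠ i → w j = v j := by
      intro j hj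
      have a1 := (k1 j).1
      have a2 := (k2 j).2
      simp only [hj, if_false] at a2
      have a1 : v j ≤ w j := by exact_mod_cast a1
      have a2 : w j + 1 ≤ v j + 1 := by exact_mod_cast a2
      omega
    have hi' : w i = v i ∨ w i = v i + 1 := by
      have a1 : v i ≤ w i := by exact_mod_cast (k1 i).1
      have a2 : w i ≤ v i + 1 := by exact_mod_cast (k1 i).2
      omega
    rcases hi' with h | h
    · refine ⟨(i, false), ?_⟩
      rw [F_eq_sFace]
      congr 1
      ext j
      by_cases hji : j = i
      · subst hji; simp [h]
      · simp [hji, hj j hji]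
    · refine ⟨(i, true), ?_⟩
      rw [F_eq_sFace]
      congr 1
      ext j
      by_cases hji : j = i
      · subst hji; simp [h]
      · simp [hji, hj j hji]
  · rintro ⟨p, rfl⟩
    refine ⟨⟨_, _, ?_, F_eq_sFace v p⟩, ?_⟩
    · simp [Finset.card_compl]
    · rintro x ⟨hx, -⟩ j
      simpa using hx j

lemma F_inj (v : Fin 3 → ℤ) : Function.Injective (F v) := by
  rintro ⟨i, s⟩ ⟨j, t⟩ h
  have habs : ∀ s, |sg s| = 1 := by intro s; cases s <;> simp [sg]
  have hm : (Phi v).symm (Pi.single i (sg s)) ∈ F v (i, s) := by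
    rw [mem_F, Homeomorph.apply_symm_apply]
    refine ⟨fun k => ?_, by simp⟩
    by_cases hk : k = i
    · subst hk; simp [habs]
    · simp [hk]
  rw [h, mem_F, Homeomorph.apply_symm_apply] at hm
  have h2 := hm.2
  by_cases hji : j = i
  · subst hji
    simp only [Pi.single_eq_same] at h2
    cases s <;> cases t <;> first | rfl | (norm_num [sg] at h2)
  · simp only [Pi.single_eq_of_ne hji] at h2
    have := habs t
    rw [← h2] at this
    simp at this

lemma sUnion_eq (v : Fin 3 → ℤ) (b : Fin 3 → Bool → Bool) (𝒜 : Set (Set (Fin 3 → ℝ)))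
    (h : 𝒜 ⊆ Set.range (F v)) (hb : ∀ i s, b i s = true ↔ F v (i, s) ∈ 𝒜) :
    ⋃₀ 𝒜 = Phi v ⁻¹' U b := by
  ext x
  constructor
  · rintro ⟨G, hG, hx⟩
    obtain ⟨⟨i, s⟩, rfl⟩ := h hG
    rw [mem_F] at hx
    exact ⟨hx.1, i, s, (hb i s).2 hG, hx.2⟩
  · rintro ⟨hx, i, s, hbs, hi⟩
    exact ⟨F v (i, s), (hb i s).1 hbs, (mem_F _ _ _).2 ⟨hx, hi⟩⟩

lemma preHomeo (v : Fin 3 → ℤ) (Y : Set (Fin 3 → ℝ)) : Nonempty (↥(Phi v ⁻¹' Y) ≃ₜ ↥Y) :=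
  ⟨(Phi v).subtype fun _ => Iff.rfl⟩

end CubeDisk

/-- let `Q³` be a 3-cube of the cubulation of ℝ³ and `A²` a nonempty proper
connected union of squares of `∂Q³` homeomorphic to a disk. Then `A²` consists of 1 to 5
squares, and the closed complement `Cl(∂Q³ \ A²)` is the union of the remaining squares and
is again a connected disk; in particular a disk of 4 or 5 squares has a complementary disk
of at most 2 squares. -/
theorem cube_boundary_disk_complement (v : Fin 3 → ℤ)
    (𝒜 : Set (Set (Fin 3 → ℝ)))
    (h𝒜 : 𝒜 ⊆ {G ∈ sFaces 3 1 2 | G ⊆ sFace 3 1 v Finset.univ})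
    (hne : 𝒜.Nonempty)
    (hproper : 𝒜 ≠ {G ∈ sFaces 3 1 2 | G ⊆ sFace 3 1 v Finset.univ})
    (hconn : IsConnected (⋃₀ 𝒜))
    (hdisk : Nonempty (↥(⋃₀ 𝒜) ≃ₜ ↥Disk2)) :
    (1 ≤ 𝒜.ncard ∧ 𝒜.ncard ≤ 5) ∧
    closure ((⋃₀ {G ∈ sFaces 3 1 2 | G ⊆ sFace 3 1 v Finset.univ}) \ ⋃₀ 𝒜) =
      ⋃₀ ({G ∈ sFaces 3 1 2 | G ⊆ sFace 3 1 v Finset.univ} \ 𝒜) ∧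
    IsConnected (⋃₀ ({G ∈ sFaces 3 1 2 | G ⊆ sFace 3 1 v Finset.univ} \ 𝒜)) ∧
    Nonempty (↥(⋃₀ ({G ∈ sFaces 3 1 2 | G ⊆ sFace 3 1 v Finset.univ} \ 𝒜)) ≃ₜ ↥Disk2) ∧
    (4 ≤ 𝒜.ncard → ({G ∈ sFaces 3 1 2 | G ⊆ sFace 3 1 v Finset.univ} \ 𝒜).ncard ≤ 2) := by
  classical
  rw [CubeDisk.faces_eq] at *
  have hfin : (Set.range (CubeDisk.F v)).Finite := Set.finite_range _
  have hcard : (Set.range (CubeDisk.F v)).ncard = 6 := by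
    rw [← Set.image_univ, Set.ncard_image_of_injective _ (CubeDisk.F_inj v), Set.ncard_univ]
    simp
  have hAfin : 𝒜.Finite := hfin.subset h𝒜
  have hpos : 0 < 𝒜.ncard := (Set.ncard_pos hAfin).2 hne
  have hlt : 𝒜.ncard < 6 := by
    rw [← hcard]; exact Set.ncard_lt_ncard (h𝒜.ssubset_of_ne hproper) hfin
  have hdiff : (Set.range (CubeDisk.F v) \ 𝒜).ncard = 6 - 𝒜.ncard := by
    rw [Set.ncard_sdiff h𝒜 hAfin, hcard]
  let b : Fin 3 → Bool → Bool := fun i s => decide (CubeDisk.F v (i, s) ∈ 𝒜)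
  have hb : ∀ i s, b i s = true ↔ CubeDisk.F v (i, s) ∈ 𝒜 := fun i s => decide_eq_true_iff
  have hUA := CubeDisk.sUnion_eq v b 𝒜 h𝒜 hb
  have hUall := CubeDisk.sUnion_eq v (fun _ _ => true) (Set.range (CubeDisk.F v)) subset_rfl
    (by simp)
  have hUc := CubeDisk.sUnion_eq v (fun i s => !(b i s)) (Set.range (CubeDisk.F v) \ 𝒜)
    Set.sdiff_subset (by simp [b])
  obtain ⟨eA⟩ := hdisk
  rw [hUA] at eA
  obtain ⟨e1⟩ := CubeDisk.preHomeo v (CubeDisk.U b)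
  have hgood : CubeDisk.good (fun i s => !(b i s)) := by
    rcases CubeDisk.classify b with h | h | h | h | h
    · obtain ⟨G, hG⟩ := hne
      obtain ⟨⟨i, s⟩, rfl⟩ := h𝒜 hG
      have := (hb i s).2 hG
      rw [h] at this
      cases this
    · exfalso
      apply hproper
      apply subset_antisymm h𝒜
      rintro _ ⟨⟨i, s⟩, rfl⟩
      exact (hb i s).1 (h i s)
    · obtain ⟨e2⟩ := CubeDisk.orb_homeo h
      exact (CubeDisk.not_R (e2.trans (e1.symm.trans eA))).elim
    · obtain ⟨e2⟩ := CubeDisk.orb_homeo h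
      exact (CubeDisk.not_O (e2.trans (e1.symm.trans eA))).elim
    · exact h
  have hD : Nonempty (↥(⋃₀ (Set.range (CubeDisk.F v) \ 𝒜)) ≃ₜ ↥Disk2) := by
    rw [hUc]
    obtain ⟨e2⟩ := CubeDisk.preHomeo v (CubeDisk.U fun i s => !(b i s))
    obtain ⟨e3⟩ := CubeDisk.good_disk hgood
    exact ⟨e2.trans e3⟩
  refine ⟨⟨hpos, by omega⟩, ?_, ?_, hD, fun h => by omega⟩
  · rw [hUA, hUall, hUc, ← Set.preimage_sdiff, ← Homeomorph.preimage_closure, CubeDisk.U_closure]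
  · obtain ⟨e⟩ := hD
    have := e.contractibleSpace
    exact isConnected_iff_connectedSpace.2 inferInstance
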